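/- For all μ ∈ [0, 1), [−11 + 7μ + 31μ² − 22μ³ − 24μ⁴ + 11μ⁵ + 6μ⁶] · exp((0.5 + μ)/(1 − μ²)) − [−11 − 7μ + 31μ² + 22μ³ − 24μ⁴ − 11μ⁵ + 6μ⁶] · exp((0.5 − μ)/(1 − μ²)) ≤ 0. -/

import Mathlib

/-!
The two coefficients are `p μ` and `p (-μ)` for a single polynomial `p`, and the two exponents
differ by `2 * μ / (1 - μ ^ 2) ≥ 2 * μ`. Since `p ≤ 0` on `[0, 1]`, the bound `exp t ≥ 1 + t`
reduces the claim to the polynomial inequality `p μ * (2 * μ + 1) ≤ p (-μ)`, whose sides differ by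
`2 * μ * q μ`. In the Bernstein basis of degree `7` both `-p` and `q` have only nonnegative
coefficients; in degree `6`, their own degree, each has a negative one.
-/

theorem mul_exp_le_mul_exp_of_mul_sub_add_one_le {a b x y : ℝ} (ha : a ≤ 0)
    (h : a * (y - x + 1) ≤ b) : a * Real.exp y ≤ b * Real.exp x := by
  calc a * Real.exp y = a * Real.exp (y - x) * Real.exp x := by
        rw [mul_assoc, ← Real.exp_add, sub_add_cancel]
    _ ≤ a * (y - x + 1) * Real.exp x := by
        gcongr ?_ * _
        exact mul_le_mul_of_nonpos_left (Real.add_one_le_exp _) ha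
    _ ≤ b * Real.exp x := by gcongr

theorem two_mul_le_add_div_sub_sub_div {K : Type*} [Field K] [LinearOrder K]
    [IsStrictOrderedRing K] (c : K) {x : K} (hx0 : 0 ≤ x) (hx1 : x < 1) :
    2 * x ≤ (c + x) / (1 - x ^ 2) - (c - x) / (1 - x ^ 2) := by
  have hpos : 0 < 1 - x ^ 2 := sub_pos.2 (pow_lt_one₀ hx0 hx1 two_ne_zero)
  have hle : 1 - x ^ 2 ≤ 1 := sub_le_self 1 (sq_nonneg x)
  calc 2 * x ≤ 2 * x / (1 - x ^ 2) := le_div_self (by positivity) hpos hle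
    _ = (c + x) / (1 - x ^ 2) - (c - x) / (1 - x ^ 2) := by ring

/-- The coefficient of `exp ((0.5 + μ) / (1 - μ ^ 2))` in the boundary inequality; the coefficient
of `exp ((0.5 - μ) / (1 - μ ^ 2))` is its value at `-μ`. -/
def boundaryPoly {R : Type*} [CommRing R] (x : R) : R :=
  -11 + 7 * x + 31 * x ^ 2 - 22 * x ^ 3 - 24 * x ^ 4 + 11 * x ^ 5 + 6 * x ^ 6

namespace boundaryPoly

section Identities

variable {R : Type*} [CommRing R] (x : R)

theorem neg_eq_bernstein :
    -boundaryPoly x = 11 * (1 - x) ^ 7 + 70 * x * (1 - x) ^ 6 + 158 * x ^ 2 * (1 - x) ^ 5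
      + 147 * x ^ 3 * (1 - x) ^ 4 + 47 * x ^ 4 * (1 - x) ^ 3 + 9 * x ^ 5 * (1 - x) ^ 2
      + 12 * x ^ 6 * (1 - x) + 2 * x ^ 7 := by
  rw [boundaryPoly]
  ring

theorem apply_neg_sub_mul_eq_bernstein :
    boundaryPoly (-x) - boundaryPoly x * (2 * x + 1) =
      2 * x * (4 * (1 - x) ^ 7 + 21 * x * (1 - x) ^ 6 + 33 * x ^ 2 * (1 - x) ^ 5
        + 12 * x ^ 3 * (1 - x) ^ 4 + 11 * x ^ 4 * (1 - x) ^ 3 + 49 * x ^ 5 * (1 - x) ^ 2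
        + 40 * x ^ 6 * (1 - x) + 6 * x ^ 7) := by
  rw [boundaryPoly, boundaryPoly]
  ring

end Identities

section Inequalities

variable {R : Type*} [CommRing R] [LinearOrder R] [IsStrictOrderedRing R] {x : R}

theorem nonpos (hx0 : 0 ≤ x) (hx1 : x ≤ 1) : boundaryPoly x ≤ 0 := by
  have : 0 ≤ 1 - x := sub_nonneg.2 hx1
  rw [← neg_nonneg, neg_eq_bernstein]
  positivity

theorem mul_le_apply_neg (hx0 : 0 ≤ x) (hx1 : x ≤ 1) :
    boundaryPoly x * (2 * x + 1) ≤ boundaryPoly (-x) := by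
  have : 0 ≤ 1 - x := sub_nonneg.2 hx1
  rw [← sub_nonneg, apply_neg_sub_mul_eq_bernstein]
  positivity

end Inequalities

end boundaryPoly

theorem boundary_inequality_third_level (μ : ℝ) (hμ0 : 0 ≤ μ) (hμ1 : μ < 1) :
    (-11 + 7*μ + 31*μ^2 - 22*μ^3 - 24*μ^4 + 11*μ^5 + 6*μ^6) * Real.exp ((0.5 + μ)/(1 - μ^2))
      - (-11 - 7*μ + 31*μ^2 + 22*μ^3 - 24*μ^4 - 11*μ^5 + 6*μ^6) * Real.exp ((0.5 - μ)/(1 - μ^2)) ≤ 0 := by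
  have hp : boundaryPoly μ ≤ 0 := boundaryPoly.nonpos hμ0 hμ1.le
  have hcoeff : boundaryPoly μ * ((0.5 + μ) / (1 - μ ^ 2) - (0.5 - μ) / (1 - μ ^ 2) + 1)
      ≤ boundaryPoly (-μ) :=
    calc boundaryPoly μ * ((0.5 + μ) / (1 - μ ^ 2) - (0.5 - μ) / (1 - μ ^ 2) + 1)
        ≤ boundaryPoly μ * (2 * μ + 1) :=
          mul_le_mul_of_nonpos_left
            (add_le_add_left (two_mul_le_add_div_sub_sub_div 0.5 hμ0 hμ1) 1) hp
      _ ≤ boundaryPoly (-μ) := boundaryPoly.mul_le_apply_neg hμ0 hμ1.le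
  have hexp := mul_exp_le_mul_exp_of_mul_sub_add_one_le hp hcoeff
  have hneg : boundaryPoly (-μ) =
      -11 - 7*μ + 31*μ^2 + 22*μ^3 - 24*μ^4 - 11*μ^5 + 6*μ^6 := by
    rw [boundaryPoly]
    ring
  rw [hneg] at hexp
  exact sub_nonpos.2 hexp
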